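/- arXiv:2201.13119 — 4 statements merged into one kernel-verified Lean document; each statement's English description precedes it below -/
import Mathlib

section
/- Let G = (V,E) be a caterpillar, let k ≥ 0 be an integer, let L = k⁴ + 2k², and let H₀ be the graph constructed from G and k as described. If G has bandwidth at most k, then H₀ has bandwidth at most L. -/
/-!
The bound comes from sorting the vertices of `H₀` by an integer key. Let `g` be an ordering of `V`
witnessing bandwidth at most `k`. The vertex `x_v` gets key `4 g(v) + 3`; half of its `2k⁴`
pendants get the key just below, half the key just above. The path of an edge, walked from its
`g`-smaller end `lo` to its `g`-larger end `hi`, advances by two keys per step until it reaches the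
key of `hi` and then stays there: its `τ`-th vertex has key `3 + 2 min(2 lo + τ, 2 hi)`. Since
`hi - lo ≤ k` and the path has `2k` edges, it does reach `hi` in time.

The keys of adjacent vertices lie in a common window `{2j+1, 2j+2, 2j+3}`, so it is enough that each
window holds at most `k⁴ + 2k² + 1` vertices (`bandwidthLE_of_key`). A window meets at most one
`x_v`, at most `k⁴` pendants (those with key `2j+2`), and at most `2k²` inner path vertices. For the
last count (`card_triples_even`, `card_triples_odd`), the vertices passing through the window and
those resting at the larger end of their edge are placed injectively into complementary parts of a
`k × 2k` grid. The argument only uses the ordering `g`, so it works for every graph `G`.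
-/

section

variable {V : Type*} [Fintype V] [LinearOrder V] (G : SimpleGraph V) [DecidableRel G.Adj]

/-- `G` is a caterpillar: a tree all of whose vertices of degree at least three lie on
a common path. -/
def IsCaterpillar : Prop :=
  G.Connected ∧ G.IsAcyclic ∧
  ∃ (a b : V) (p : G.Walk a b), p.IsPath ∧ ∀ v, 3 ≤ G.degree v → v ∈ p.support

/-- The edges of `G`, each represented once by its ordered pair of endpoints. -/
abbrev OrdEdge : Type _ := {p : V × V // G.Adj p.1 p.2 ∧ p.1 < p.2}

/-- Vertices of `H₀`: the vertices `x_v` for `v ∈ V`, the `2k⁴` pendant vertices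
attached to each `x_v`, and for each edge of `G` the `2k−1` internal vertices of the
path with `2k` edges replacing it. -/
abbrev H0Vert (k : ℕ) : Type _ := V ⊕ ((V × Fin (2 * k ^ 4)) ⊕ (OrdEdge G × Fin (2 * k - 1)))

/-- The relation generating the edges of `H₀`. -/
def H0Rel (k : ℕ) : H0Vert G k → H0Vert G k → Prop
  | Sum.inl v, Sum.inr (Sum.inl (u, _)) => v = u
  | Sum.inl v, Sum.inr (Sum.inr (e, i)) =>
      (v = e.val.1 ∧ (i : ℕ) = 0) ∨ (v = e.val.2 ∧ (i : ℕ) = 2 * k - 2)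
  | Sum.inr (Sum.inr (e, i)), Sum.inr (Sum.inr (e', j)) => e = e' ∧ (j : ℕ) = (i : ℕ) + 1
  | _, _ => False

/-- The graph `H₀` obtained from `G`: each vertex `v` becomes `x_v` with `2k⁴` pendant
neighbors, and each edge is replaced by a path with `2k` edges. -/
def H0Graph (k : ℕ) : SimpleGraph (H0Vert G k) := SimpleGraph.fromRel (H0Rel G k)

/-- The graph `H`: two disjoint copies of `H₀` together with an edge between the two
copies of `x_{v₀}` for a fixed vertex `v₀ ∈ V`. -/
def HGraph (k : ℕ) (v₀ : V) : SimpleGraph (Bool × H0Vert G k) :=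
  SimpleGraph.fromRel (fun x y =>
    (x.1 = y.1 ∧ H0Rel G k x.2 y.2) ∨
    (x.1 ≠ y.1 ∧ x.2 = Sum.inl v₀ ∧ y.2 = Sum.inl v₀))

end

section

variable {W : Type*} [Fintype W]

/-- The graph `J` has bandwidth at most `k`. -/
def BandwidthLE (J : SimpleGraph W) (k : ℕ) : Prop :=
  ∃ f : W ≃ Fin (Fintype.card W),
    ∀ v u, J.Adj v u → ((f v : ℤ) - (f u : ℤ)).natAbs ≤ k

/-- The graph `J`, bipartite with bipartition `(X, Y)` given by a proper 2-coloring
`s`, has bipartite bandwidth at most `L`: there are orderings `α` of `X` and `β` of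
`Y` with `|α(u) − β(v)| ≤ L` for every edge `uv`. -/
def BipartiteBandwidthLE (J : SimpleGraph W) (L : ℕ) : Prop :=
  ∃ s : W → Bool,
    (∀ u v, J.Adj u v → s u ≠ s v) ∧
    ∃ (α : {x : W // s x = true} ≃ Fin (Fintype.card {x : W // s x = true}))
      (β : {x : W // s x = false} ≃ Fin (Fintype.card {x : W // s x = false})),
      ∀ (u : {x : W // s x = true}) (v : {x : W // s x = false}),
        J.Adj u.val v.val → ((α u : ℤ) - (β v : ℤ)).natAbs ≤ L

end

/-- If the elements whose keys lie between those of two adjacent vertices never number more than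
`B + 1`, then ordering the vertices by key gives bandwidth at most `B`. -/
theorem bandwidthLE_of_key {W : Type*} [Fintype W] (J : SimpleGraph W) (B : ℕ) (K : W → ℕ)
    (h : ∀ u v, J.Adj u v → K u ≤ K v →
      (Finset.univ.filter fun w => K u ≤ K w ∧ K w ≤ K v).card ≤ B + 1) :
    BandwidthLE J B := by
  classical
  let e := Fintype.equivFin W
  let σ := Tuple.sort (K ∘ e.symm)
  have hmono : Monotone ((K ∘ e.symm) ∘ σ) := Tuple.monotone_sort _
  let f : W ≃ Fin (Fintype.card W) := e.trans σ.symm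
  have hf : ∀ i j, i ≤ j → K (f.symm i) ≤ K (f.symm j) := fun i j hij => hmono hij
  have key : ∀ u v, J.Adj u v → f u ≤ f v → (f v : ℕ) ≤ f u + B := by
    intro u v huv hle
    have h1 : K u ≤ K v := by simpa using hf _ _ hle
    have h2 := h u v huv h1
    have h3 : (Finset.Icc (f u) (f v)).card ≤
        (Finset.univ.filter fun w => K u ≤ K w ∧ K w ≤ K v).card := by
      refine Finset.card_le_card_of_injOn f.symm ?_ f.symm.injective.injOn
      intro i hi
      simp only [Finset.coe_Icc, Set.mem_Icc] at hi
      have a := hf _ _ hi.1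
      have b := hf _ _ hi.2
      simp only [Equiv.symm_apply_apply] at a b
      simp [a, b]
    rw [Fin.card_Icc] at h3
    omega
  refine ⟨f, fun v u hvu => ?_⟩
  rcases le_total (f v) (f u) with hle | hle
  · have := key v u hvu hle
    have : (f v : ℕ) ≤ f u := hle
    omega
  · have := key u v hvu.symm hle
    have : (f u : ℕ) ≤ f v := hle
    omega

/-- Triples `(lo, hi, τ)` stand for the `τ`-th inner vertex of an edge with ends `lo < hi`. At most
`2k²` of them are at height `2m` or `2m + 1`. -/
theorem card_triples_even (k m : ℕ) (S : Finset (ℕ × ℕ × ℕ))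
    (hS : ∀ t ∈ S, t.1 < t.2.1 ∧ t.2.1 ≤ t.1 + k ∧ 1 ≤ t.2.2 ∧ t.2.2 + 1 ≤ 2 * k ∧
      2 * m ≤ min (2 * t.1 + t.2.2) (2 * t.2.1) ∧
      min (2 * t.1 + t.2.2) (2 * t.2.1) ≤ 2 * m + 1) :
    S.card ≤ 2 * k ^ 2 := by
  have hc : (Finset.range k ×ˢ Finset.range (2 * k)).card = 2 * k ^ 2 := by
    rw [Finset.card_product, Finset.card_range, Finset.card_range]; ring
  rw [← hc]
  -- With `d = m - lo`, passing vertices fill columns below `2(k - d)` of row `d`; resting vertices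
  -- (`hi = m`) fill columns from `2d` on of row `k - d`.
  refine Finset.card_le_card_of_injOn
    (fun t => if m < t.2.1 then (m - t.1, 2 * (t.2.1 - m - 1) + (2 * t.1 + t.2.2 - 2 * m))
      else (k - (m - t.1), 2 * k - 1 - (2 * t.1 + t.2.2 - 2 * m))) ?_ ?_
  · rintro ⟨a, b, c⟩ ht
    have := hS _ ht
    simp only [Finset.coe_product, Finset.coe_range, Set.mem_prod, Set.mem_Iio] at this ⊢
    split_ifs <;> constructor <;> simp only <;> omega
  · rintro ⟨a, b, c⟩ ht ⟨a', b', c'⟩ ht' heq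
    have h1 := hS _ ht
    have h2 := hS _ ht'
    simp only at h1 h2 heq
    split_ifs at heq <;> simp only [Prod.mk.injEq] at heq ⊢ <;> omega

/-- At most `2k²` inner path vertices are at height `2m - 1` or `2m`. -/
theorem card_triples_odd (k m : ℕ) (S : Finset (ℕ × ℕ × ℕ))
    (hS : ∀ t ∈ S, t.1 < t.2.1 ∧ t.2.1 ≤ t.1 + k ∧ 1 ≤ t.2.2 ∧ t.2.2 + 1 ≤ 2 * k ∧
      2 * m ≤ min (2 * t.1 + t.2.2) (2 * t.2.1) + 1 ∧
      min (2 * t.1 + t.2.2) (2 * t.2.1) ≤ 2 * m) :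
    S.card ≤ 2 * k ^ 2 := by
  have hc : (Finset.range k ×ˢ Finset.range (2 * k)).card = 2 * k ^ 2 := by
    rw [Finset.card_product, Finset.card_range, Finset.card_range]; ring
  rw [← hc]
  -- With `d = m - lo`, passing vertices fill columns up to `2(k - d)` of row `d - 1`; resting
  -- vertices fill columns from `2d` on of row `k - d`.
  refine Finset.card_le_card_of_injOn
    (fun t => if 2 * t.1 + t.2.2 + 1 = 2 * m ∨ m < t.2.1 then
        (m - t.1 - 1, 2 * (t.2.1 - m) - (2 * t.1 + t.2.2 + 1 - 2 * m))
      else (k - (m - t.1), 2 * k - 1 - (2 * t.1 + t.2.2 - 2 * m))) ?_ ?_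
  · rintro ⟨a, b, c⟩ ht
    have := hS _ ht
    simp only [Finset.coe_product, Finset.coe_range, Set.mem_prod, Set.mem_Iio] at this ⊢
    split_ifs <;> constructor <;> simp only <;> omega
  · rintro ⟨a, b, c⟩ ht ⟨a', b', c'⟩ ht' heq
    have h1 := hS _ ht
    have h2 := hS _ ht'
    simp only at h1 h2 heq
    split_ifs at heq <;> simp only [Prod.mk.injEq] at heq ⊢ <;> omega

section

variable {V : Type*} [LinearOrder V] (G : SimpleGraph V)

/-- The triple `(lo, hi, τ)` of an inner path vertex: the `g`-values of the ends of its edge, and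
its distance along the path from the `g`-smaller end. -/
def pathTriple (g : V → ℕ) (k : ℕ) (q : OrdEdge G × Fin (2 * k - 1)) : ℕ × ℕ × ℕ :=
  (min (g q.1.val.1) (g q.1.val.2), max (g q.1.val.1) (g q.1.val.2),
    if g q.1.val.1 < g q.1.val.2 then (q.2 : ℕ) + 1 else 2 * k - 1 - q.2)

/-- The key by which the vertices of `H₀` are sorted. Odd keys hold the `x_v` and the inner path
vertices, even keys the pendants; the offset `3` keeps all keys positive. -/
def h0Key (g : V → ℕ) (k : ℕ) : H0Vert G k → ℕ
  | Sum.inl v => 4 * g v + 3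
  | Sum.inr (Sum.inl (v, i)) => if (i : ℕ) < k ^ 4 then 4 * g v + 2 else 4 * g v + 4
  | Sum.inr (Sum.inr q) =>
      3 + 2 * min (2 * (pathTriple G g k q).1 + (pathTriple G g k q).2.2)
        (2 * (pathTriple G g k q).2.1)

variable {G}

theorem pathTriple_injective {g : V → ℕ} (hg : Function.Injective g) (k : ℕ) :
    Function.Injective (pathTriple G g k) := by
  rintro ⟨⟨⟨a, b⟩, hab, hlt⟩, i⟩ ⟨⟨⟨a', b'⟩, hab', hlt'⟩, i'⟩ h
  simp only [pathTriple, Prod.mk.injEq] at h hab hlt hab' hlt'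
  obtain ⟨h1, h2, h3⟩ := h
  have hi := i.isLt
  have hi' := i'.isLt
  have hne : g a ≠ g b := fun h => hlt.ne (hg h)
  have hcase : (g a = g a' ∧ g b = g b') ∨ (g a = g b' ∧ g b = g a') := by omega
  rcases hcase with ⟨ha, hb⟩ | ⟨ha, hb⟩
  · have hii : (i : ℕ) = i' := by
      rw [ha, hb] at h3
      split_ifs at h3 <;> omega
    obtain rfl := hg ha
    obtain rfl := hg hb
    obtain rfl := Fin.ext hii
    rfl
  · obtain rfl := hg ha
    obtain rfl := hg hb
    exact absurd hlt (not_lt.mpr hlt'.le)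

theorem pathTriple_spec {g : V → ℕ} (hg : Function.Injective g) {k : ℕ}
    (hk : ∀ u v, G.Adj u v → g u ≤ g v + k) (q : OrdEdge G × Fin (2 * k - 1)) :
    (pathTriple G g k q).1 < (pathTriple G g k q).2.1 ∧
    (pathTriple G g k q).2.1 ≤ (pathTriple G g k q).1 + k ∧ 1 ≤ (pathTriple G g k q).2.2 ∧
    (pathTriple G g k q).2.2 + 1 ≤ 2 * k := by
  obtain ⟨⟨⟨a, b⟩, hab, hlt⟩, i⟩ := q
  have hi := i.isLt
  have hne : g a ≠ g b := fun h => hlt.ne (hg h)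
  have h1 := hk _ _ hab
  have h2 := hk _ _ hab.symm
  simp only [pathTriple] at *
  refine ⟨by omega, by omega, ?_, ?_⟩ <;> split_ifs <;> omega

/-- A window of three consecutive keys with odd ends holds at most `k⁴ + 2k² + 1` vertices. -/
theorem card_window [Fintype V] [DecidableRel G.Adj] {g : V → ℕ} (hg : Function.Injective g)
    {k : ℕ} (hk : ∀ u v, G.Adj u v → g u ≤ g v + k) (j : ℕ) :
    (Finset.univ.filter fun w : H0Vert G k =>
      2 * j + 1 ≤ h0Key G g k w ∧ h0Key G g k w ≤ 2 * j + 3).card ≤ k ^ 4 + 2 * k ^ 2 + 1 := by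
  classical
  rw [Finset.card_filter, Fintype.sum_sum_type, Fintype.sum_sum_type, ← Finset.card_filter,
    ← Finset.card_filter, ← Finset.card_filter]
  have hx : (Finset.univ.filter fun v : V => 2 * j + 1 ≤ h0Key G g k (Sum.inl v) ∧
      h0Key G g k (Sum.inl v) ≤ 2 * j + 3).card ≤ 1 := by
    rw [Finset.card_le_one]
    intro a ha b hb
    replace ha := (Finset.mem_filter.mp ha).2
    replace hb := (Finset.mem_filter.mp hb).2
    simp only [h0Key] at ha hb
    exact hg (by omega)
  have hp : (Finset.univ.filter fun p : V × Fin (2 * k ^ 4) =>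
      2 * j + 1 ≤ h0Key G g k (Sum.inr (Sum.inl p)) ∧
      h0Key G g k (Sum.inr (Sum.inl p)) ≤ 2 * j + 3).card ≤ k ^ 4 := by
    refine le_of_le_of_eq (Finset.card_le_card_of_injOn (t := Finset.range (k ^ 4))
      (fun p => if (p.2 : ℕ) < k ^ 4 then (p.2 : ℕ) else p.2 - k ^ 4) ?_ ?_) (Finset.card_range _)
    · rintro ⟨v, i⟩ -
      have := i.isLt
      simp only [Finset.coe_range, Set.mem_Iio]
      split_ifs <;> omega
    · rintro ⟨v, i⟩ hv ⟨v', i'⟩ hv' heq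
      replace hv := (Finset.mem_filter.mp hv).2
      replace hv' := (Finset.mem_filter.mp hv').2
      simp only [h0Key] at hv hv' heq
      have h1 : g v = g v' := by split_ifs at hv hv' <;> omega
      have h2 : (i : ℕ) = i' := by split_ifs at hv hv' heq <;> omega
      rw [hg h1, Fin.ext h2]
  have hq : (Finset.univ.filter fun q : OrdEdge G × Fin (2 * k - 1) =>
      2 * j + 1 ≤ h0Key G g k (Sum.inr (Sum.inr q)) ∧
      h0Key G g k (Sum.inr (Sum.inr q)) ≤ 2 * j + 3).card ≤ 2 * k ^ 2 := by
    rw [← Finset.card_image_of_injective _ (pathTriple_injective hg k)]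
    -- The key `3 + 2h` is in the window exactly when the height `h` is `j - 1` or `j`.
    rcases Nat.even_or_odd' j with ⟨m, rfl | rfl⟩
    · refine card_triples_odd k m _ ?_
      intro t ht
      simp only [Finset.mem_image, Finset.mem_filter] at ht
      obtain ⟨q, ⟨-, hq⟩, rfl⟩ := ht
      have := pathTriple_spec hg hk q
      simp only [h0Key] at hq
      exact ⟨this.1, this.2.1, this.2.2.1, this.2.2.2, by omega, by omega⟩
    · refine card_triples_even k m _ ?_
      intro t ht
      simp only [Finset.mem_image, Finset.mem_filter] at ht
      obtain ⟨q, ⟨-, hq⟩, rfl⟩ := ht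
      have := pathTriple_spec hg hk q
      simp only [h0Key] at hq
      exact ⟨this.1, this.2.1, this.2.2.1, this.2.2.2, by omega, by omega⟩
  omega

theorem h0Rel_window {g : V → ℕ} (hg : Function.Injective g) {k : ℕ}
    (hk : ∀ u v, G.Adj u v → g u ≤ g v + k) (x y : H0Vert G k) (h : H0Rel G k x y) :
    ∃ j, (2 * j + 1 ≤ h0Key G g k x ∧ h0Key G g k x ≤ 2 * j + 3) ∧
      (2 * j + 1 ≤ h0Key G g k y ∧ h0Key G g k y ≤ 2 * j + 3) := by
  rcases x with v | ⟨u, i⟩ | ⟨e, i⟩ <;> rcases y with v' | ⟨u', i'⟩ | ⟨e', i'⟩ <;>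
    simp only [H0Rel] at h
  · subst h
    by_cases hi : (i' : ℕ) < k ^ 4
    · exact ⟨2 * g v, by simp only [h0Key]; omega, by simp only [h0Key, if_pos hi]; omega⟩
    · exact ⟨2 * g v + 1, by simp only [h0Key]; omega, by simp only [h0Key, if_neg hi]; omega⟩
  · obtain ⟨⟨a, b⟩, hab, hlt⟩ := e'
    have hi := i'.isLt
    have hne : g a ≠ g b := fun h => hlt.ne (hg h)
    have h1 := hk _ _ hab
    have h2 := hk _ _ hab.symm
    simp only [h0Key, pathTriple] at h h1 h2 ⊢
    -- Either the path vertex is one step above the lower end, or at most one step below the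
    -- upper end.
    rcases h with ⟨rfl, h⟩ | ⟨rfl, h⟩ <;> split_ifs with hc
    · exact ⟨2 * g v + 1, by omega, by omega⟩
    · exact ⟨2 * g v, by omega, by omega⟩
    · exact ⟨2 * g v, by omega, by omega⟩
    · exact ⟨2 * g v + 1, by omega, by omega⟩
  · obtain ⟨rfl, h⟩ := h
    have hi := i.isLt
    have hi' := i'.isLt
    obtain ⟨⟨a, b⟩, hab, hlt⟩ := e
    simp only [h0Key, pathTriple]
    split_ifs with hc
    · exact ⟨min (2 * min (g a) (g b) + (i + 1)) (2 * max (g a) (g b)) + 1, by omega, by omega⟩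
    · exact ⟨min (2 * min (g a) (g b) + (2 * k - 1 - i')) (2 * max (g a) (g b)) + 1,
        by omega, by omega⟩

end

/-- If the caterpillar `G` has bandwidth at most `k`, then `H₀` has bandwidth at most
`L = k⁴ + 2k²`. -/
theorem bandwidth_H0_of_bandwidth {V : Type*} [Fintype V] [LinearOrder V]
    (G : SimpleGraph V) [DecidableRel G.Adj] (k : ℕ)
    (hcat : IsCaterpillar G) (hG : BandwidthLE G k) :
    BandwidthLE (H0Graph G k) (k ^ 4 + 2 * k ^ 2) := by
  obtain ⟨f, hf⟩ := hG
  have hg : Function.Injective fun v => (f v : ℕ) := Fin.val_injective.comp f.injective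
  have hk : ∀ u v, G.Adj u v → (f u : ℕ) ≤ f v + k := fun u v h => by
    have := hf u v h
    omega
  refine bandwidthLE_of_key _ _ (h0Key G (fun v => (f v : ℕ)) k) fun u v huv _ => ?_
  have hw : ∃ j, (2 * j + 1 ≤ h0Key G (fun v => (f v : ℕ)) k u ∧
        h0Key G (fun v => (f v : ℕ)) k u ≤ 2 * j + 3) ∧
      (2 * j + 1 ≤ h0Key G (fun v => (f v : ℕ)) k v ∧
        h0Key G (fun v => (f v : ℕ)) k v ≤ 2 * j + 3) := by
    rw [H0Graph, SimpleGraph.fromRel_adj] at huv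
    rcases huv.2 with h | h
    · exact h0Rel_window hg hk _ _ h
    · obtain ⟨j, a, b⟩ := h0Rel_window hg hk _ _ h
      exact ⟨j, b, a⟩
  obtain ⟨j, hu, hv⟩ := hw
  refine le_trans (Finset.card_le_card ?_) (card_window hg hk j)
  intro w
  simp only [Finset.mem_filter, Finset.mem_univ, true_and]
  omega
end

section
/- Let G = (V,E) be a caterpillar, let k ≥ 1 be an integer, let L = k⁴ + 2k², and let H₀ and H be the graphs constructed from G and k as described. If H₀ has bandwidth at most L, then H has bipartite bandwidth at most L. -/
/-- The 2-colouring of `H₀` that is `true` on the vertices `x_v`: the internal vertex of index `i`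
is at distance `i + 1` from an `x_v`, so it is `true` exactly when `i` is odd. -/
def h0Color {V : Type*} [LinearOrder V] (G : SimpleGraph V) (k : ℕ) : H0Vert G k → Bool
  | Sum.inl _ => true
  | Sum.inr (Sum.inl _) => false
  | Sum.inr (Sum.inr (_, i)) => decide ((i : ℕ) % 2 = 1)

lemma h0Color_ne_of_H0Rel {V : Type*} [LinearOrder V] (G : SimpleGraph V) (k : ℕ)
    {x y : H0Vert G k} (h : H0Rel G k x y) : h0Color G k x ≠ h0Color G k y := by
  rcases x with v | ⟨u, j⟩ | ⟨e, i⟩ <;> rcases y with v' | ⟨u', j'⟩ | ⟨e', i'⟩ <;>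
    simp only [H0Rel] at h
  · simp [h0Color]
  · have : (i' : ℕ) % 2 = 0 := by omega
    simp [h0Color, this]
  · intro hc
    simp only [h0Color, decide_eq_decide] at hc
    omega

/-- The 2-colouring of `H`: `h0Color` on the copy `true`, its opposite on the copy `false`. -/
def hColor {V : Type*} [LinearOrder V] (G : SimpleGraph V) (k : ℕ) (x : Bool × H0Vert G k) : Bool :=
  x.1 == h0Color G k x.2

/-- Forgetting the copy is a bijection from either colour class of `H` to the vertices of `H₀`. -/
def colorClassEquiv {V : Type*} [LinearOrder V] (G : SimpleGraph V) (k : ℕ) (t : Bool) :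
    {x : Bool × H0Vert G k // hColor G k x = t} ≃ H0Vert G k where
  toFun x := x.val.2
  invFun y := ⟨(t == h0Color G k y, y), by
    unfold hColor; cases t <;> cases h0Color G k y <;> rfl⟩
  left_inv := by
    rintro ⟨⟨b, y⟩, h⟩
    refine Subtype.ext (Prod.ext ?_ rfl)
    subst h
    simp only [hColor]
    cases b <;> cases h0Color G k y <;> rfl
  right_inv _ := rfl

lemma hColor_ne_of_adj {V : Type*} [LinearOrder V] (G : SimpleGraph V) (k : ℕ) (v₀ : V)
    {x y : Bool × H0Vert G k} (h : (HGraph G k v₀).Adj x y) : hColor G k x ≠ hColor G k y := by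
  obtain ⟨a, x⟩ := x
  obtain ⟨b, y⟩ := y
  simp only [HGraph, SimpleGraph.fromRel_adj] at h
  simp only [hColor]
  obtain ⟨-, h⟩ := h
  rcases h with (⟨rfl, h⟩ | ⟨h, rfl, rfl⟩) | (⟨rfl, h⟩ | ⟨h, rfl, rfl⟩)
  · have := h0Color_ne_of_H0Rel G k h
    revert this
    cases h0Color G k x <;> cases h0Color G k y <;> simp
  · simpa [h0Color] using h
  · have := h0Color_ne_of_H0Rel G k h
    revert this
    cases h0Color G k x <;> cases h0Color G k y <;> simp
  · simpa [h0Color] using h.symm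

lemma H0_adj_or_eq_of_adj {V : Type*} [LinearOrder V] (G : SimpleGraph V) (k : ℕ) (v₀ : V)
    {x y : Bool × H0Vert G k} (h : (HGraph G k v₀).Adj x y) :
    (H0Graph G k).Adj x.2 y.2 ∨ x.2 = y.2 := by
  by_cases hxy : x.2 = y.2
  · exact Or.inr hxy
  · simp only [HGraph, H0Graph, SimpleGraph.fromRel_adj] at h ⊢
    grind

/-- If `H₀` (built from the caterpillar `G` and `k ≥ 1`) has bandwidth at most
`L = k⁴ + 2k²`, then `H` has bipartite bandwidth at most `L`. -/
theorem bipartite_bandwidth_H_of_bandwidth_H0 {V : Type*} [Fintype V] [LinearOrder V]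
    (G : SimpleGraph V) [DecidableRel G.Adj] (k : ℕ) (v₀ : V)
    (hcat : IsCaterpillar G) (hk : 1 ≤ k)
    (hH0 : BandwidthLE (H0Graph G k) (k ^ 4 + 2 * k ^ 2)) :
    BipartiteBandwidthLE (HGraph G k v₀) (k ^ 4 + 2 * k ^ 2) := by
  obtain ⟨f, hf⟩ := hH0
  refine ⟨hColor G k, fun u v h => hColor_ne_of_adj G k v₀ h,
    ((colorClassEquiv G k true).trans f).trans
      (finCongr (Fintype.card_congr (colorClassEquiv G k true)).symm),
    ((colorClassEquiv G k false).trans f).trans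
      (finCongr (Fintype.card_congr (colorClassEquiv G k false)).symm), ?_⟩
  intro u v huv
  change ((f u.val.2 : ℤ) - (f v.val.2 : ℤ)).natAbs ≤ _
  rcases H0_adj_or_eq_of_adj G k v₀ huv with h | h
  · exact hf _ _ h
  · simp [h]
end

section
/- Let G = (V,E) be a caterpillar, let k ≥ 3 be an integer, let L = k⁴ + 2k², and let H be the graph constructed from G and k as described. Then H has bipartite bandwidth at most L if and only if G has bandwidth at most k. -/
/-! ### Ranking by a key -/

/-- The elements of a finite type can be listed so that `κ` is monotone along the list. -/
lemma exists_rank {W : Type*} [Fintype W] (κ : W → ℕ) :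
    ∃ r : W ≃ Fin (Fintype.card W), ∀ x y, r x ≤ r y → κ x ≤ κ y := by
  let e := Fintype.equivFin W
  refine ⟨e.trans (Tuple.sort (κ ∘ e.symm)).symm, fun x y h => ?_⟩
  simpa using Tuple.monotone_sort (κ ∘ e.symm) h

/-- Two elements whose keys lie in `[m, M]` have ranks differing by less than the number of
elements with keys in `[m, M]`. -/
lemma rank_dist_le {W : Type*} [Fintype W] (κ : W → ℕ) (r : W ≃ Fin (Fintype.card W))
    (hr : ∀ x y, r x ≤ r y → κ x ≤ κ y) (m M L : ℕ)
    (hS : (Finset.univ.filter fun z => m ≤ κ z ∧ κ z ≤ M).card ≤ L + 1) (x y : W)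
    (hx : m ≤ κ x ∧ κ x ≤ M) (hy : m ≤ κ y ∧ κ y ≤ M) :
    ((r x : ℤ) - (r y : ℤ)).natAbs ≤ L := by
  wlog h : r x ≤ r y generalizing x y
  · have := this y x hy hx (le_of_not_ge h)
    omega
  have hsub : (Finset.Icc (r x) (r y)).map r.symm.toEmbedding ⊆
      Finset.univ.filter fun z => m ≤ κ z ∧ κ z ≤ M := by
    intro z hz
    simp only [Finset.mem_map, Finset.mem_Icc, Equiv.coe_toEmbedding] at hz
    obtain ⟨t, ⟨h1, h2⟩, rfl⟩ := hz
    have h3 := hr x (r.symm t) (by simpa using h1)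
    have h4 := hr (r.symm t) y (by simpa using h2)
    simp only [Finset.mem_filter, Finset.mem_univ, true_and]
    omega
  have hc := Finset.card_le_card hsub
  rw [Finset.card_map, Fin.card_Icc] at hc
  have h' : (r x : ℕ) ≤ r y := h
  omega

/-! ### A layout of `H` from a layout of `H₀` -/

section Layout

variable {V : Type*} [LinearOrder V] (G : SimpleGraph V)

/-- The proper 2-colouring of `H₀` that is `true` on every `x_v`. -/
def parity (k : ℕ) : H0Vert G k → Bool
  | Sum.inl _ => true
  | Sum.inr (Sum.inl _) => false
  | Sum.inr (Sum.inr (_, i)) => decide ((i : ℕ) % 2 = 1)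

lemma parity_ne_of_rel {k : ℕ} (hk : 3 ≤ k) (x y : H0Vert G k) (h : H0Rel G k x y) :
    parity G k x ≠ parity G k y := by
  rcases x with v | ⟨u, i⟩ | ⟨e, i⟩ <;> rcases y with w | ⟨u', i'⟩ | ⟨e', i'⟩ <;>
    simp only [H0Rel, parity] at h ⊢
  · simp
  · have : (i' : ℕ) % 2 = 0 := by omega
    simp [this]
  · intro h'
    rw [decide_eq_decide] at h'
    omega

/-- One layout of `H₀`, used for both colour classes, is a bipartite layout of `H`: each class
consists of exactly one of the two copies of every vertex of `H₀`. -/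
lemma bipartiteBandwidthLE_of_H0 [Fintype V] [DecidableRel G.Adj] {k L : ℕ} (hk : 3 ≤ k) (v₀ : V)
    (r : H0Vert G k ≃ Fin (Fintype.card (H0Vert G k)))
    (hr : ∀ x y, H0Rel G k x y → ((r x : ℤ) - (r y : ℤ)).natAbs ≤ L) :
    BipartiteBandwidthLE (HGraph G k v₀) L := by
  let s : Bool × H0Vert G k → Bool := fun x => x.1 ^^ parity G k x.2
  let E : ∀ c : Bool, {x // s x = c} ≃ H0Vert G k := fun c =>
    { toFun := fun x => x.1.2
      invFun := fun h => ⟨(c ^^ parity G k h, h), by simp [s]⟩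
      left_inv := by
        rintro ⟨⟨b, h⟩, hx⟩
        simp only [s] at hx
        subst hx
        simp
      right_inv := fun h => rfl }
  refine ⟨s, ?_, (E true).trans (r.trans (finCongr (Fintype.card_congr (E true)).symm)),
    (E false).trans (r.trans (finCongr (Fintype.card_congr (E false)).symm)), ?_⟩
  · rintro ⟨b, x⟩ ⟨c, y⟩ h
    simp only [HGraph, SimpleGraph.fromRel_adj] at h
    rcases h with ⟨-, (⟨h1, h2⟩ | ⟨h1, h2, h3⟩) | (⟨h1, h2⟩ | ⟨h1, h2, h3⟩)⟩
    · have := parity_ne_of_rel G hk _ _ h2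
      subst h1
      simpa [s] using this
    · subst h2 h3
      simpa [s] using h1
    · have := parity_ne_of_rel G hk _ _ h2
      subst h1
      simpa [s] using this.symm
    · subst h2 h3
      simpa [s] using h1.symm
  · rintro ⟨⟨b, x⟩, hx⟩ ⟨⟨c, y⟩, hy⟩ h
    simp only [HGraph, SimpleGraph.fromRel_adj] at h
    change ((r x : ℤ) - (r y : ℤ)).natAbs ≤ L
    rcases h with ⟨-, (⟨h1, h2⟩ | ⟨h1, h2, h3⟩) | (⟨h1, h2⟩ | ⟨h1, h2, h3⟩)⟩
    · exact hr _ _ h2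
    · subst h2 h3
      simp
    · have := hr _ _ h2
      omega
    · subst h2 h3
      simp

/-! ### A layout of `H₀` from a layout of `G` -/

/-- The position of the left end of `e` in the layout `g` of `G`. -/
def lowEnd (g : V → ℕ) (e : OrdEdge G) : ℕ := min (g e.1.1) (g e.1.2)

/-- The distance between the ends of `e` in the layout `g` of `G`. -/
def edgeLen (g : V → ℕ) (e : OrdEdge G) : ℕ := max (g e.1.1) (g e.1.2) - min (g e.1.1) (g e.1.2)

/-- The index of the `i`-th internal vertex of the path of `e`, counted from `0` starting at the
left end of `e` in the layout `g` (rather than at the smaller end in the order of `V`). -/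
def pathIdx (k : ℕ) (g : V → ℕ) (e : OrdEdge G) (i : ℕ) : ℕ :=
  if g e.1.1 < g e.1.2 then i else 2 * k - 2 - i

/-- The sorting key of the layout of `H₀`. With `p = g v`, half of the pendants of `x_v` have key
`4p+1`, then `x_v` has key `4p+2`, and the other pendants have key `4p+3`. Path vertices have even
keys: the path of an edge leaves its left end in steps of `2` until it reaches the key of its right
end, where it stays. -/
def key (k : ℕ) (g : V → ℕ) : H0Vert G k → ℕ
  | Sum.inl v => 4 * g v + 2
  | Sum.inr (Sum.inl (v, i)) => if (i : ℕ) < k ^ 4 then 4 * g v + 1 else 4 * g v + 3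
  | Sum.inr (Sum.inr (e, i)) =>
      4 * lowEnd G g e + 2 * min (pathIdx G k g e i + 1) (2 * edgeLen G g e) + 2

/-- A label that identifies a vertex of `H₀` within a window of three consecutive keys starting at
an even one: nothing for `x_v`, the index in its half for a pendant, and the length of the edge with
the index along the path for a path vertex. -/
def label (k : ℕ) (g : V → ℕ) : H0Vert G k → Unit ⊕ (ℕ ⊕ (ℕ × ℕ))
  | Sum.inl _ => Sum.inl ()
  | Sum.inr (Sum.inl (_, i)) =>
      Sum.inr (Sum.inl (if (i : ℕ) < k ^ 4 then (i : ℕ) else (i : ℕ) - k ^ 4))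
  | Sum.inr (Sum.inr (e, i)) => Sum.inr (Sum.inr (edgeLen G g e - 1, pathIdx G k g e i))

variable {G}

lemma edgeLen_bounds {k : ℕ} {g : V → ℕ} (hg : Function.Injective g)
    (hadj : ∀ v w, G.Adj v w → ((g v : ℤ) - (g w : ℤ)).natAbs ≤ k) (e : OrdEdge G) :
    1 ≤ edgeLen G g e ∧ edgeLen G g e ≤ k := by
  have h1 := hadj _ _ e.2.1
  have h2 : g e.1.1 ≠ g e.1.2 := fun h => e.2.2.ne (hg h)
  unfold edgeLen
  omega

lemma pathIdx_lt {k : ℕ} (hk : 3 ≤ k) (g : V → ℕ) (e : OrdEdge G) (i : Fin (2 * k - 1)) :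
    pathIdx G k g e i < 2 * k - 1 := by
  have := i.2
  unfold pathIdx
  split_ifs <;> omega

/-- An edge is determined by its left end and its length in the layout. -/
lemma edge_ext {g : V → ℕ} (hg : Function.Injective g) (e e' : OrdEdge G)
    (h1 : lowEnd G g e = lowEnd G g e') (h2 : edgeLen G g e = edgeLen G g e') : e = e' := by
  obtain ⟨⟨a, b⟩, hab, hlt⟩ := e
  obtain ⟨⟨c, d⟩, hcd, hlt'⟩ := e'
  simp only [lowEnd, edgeLen] at h1 h2 hlt hlt'
  have : (g a = g c ∧ g b = g d) ∨ (g a = g d ∧ g b = g c) := by omega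
  rcases this with ⟨h, h'⟩ | ⟨h, h'⟩
  · have := hg h
    have := hg h'
    subst_vars
    rfl
  · have := hg h
    have := hg h'
    subst_vars
    exact absurd hlt (not_lt.2 hlt'.le)

lemma label_injOn {k : ℕ} (hk : 3 ≤ k) {g : V → ℕ} (hg : Function.Injective g)
    (hadj : ∀ v w, G.Adj v w → ((g v : ℤ) - (g w : ℤ)).natAbs ≤ k) (m : ℕ) (hm : m % 2 = 0)
    (x y : H0Vert G k) (hx : m ≤ key G k g x ∧ key G k g x ≤ m + 2)
    (hy : m ≤ key G k g y ∧ key G k g y ≤ m + 2) (h : label G k g x = label G k g y) : x = y := by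
  rcases x with v | ⟨v, i⟩ | ⟨e, i⟩ <;> rcases y with w | ⟨w, i'⟩ | ⟨e', i'⟩ <;>
    simp only [label, key, Sum.inr.injEq, Sum.inl.injEq, Prod.mk.injEq, reduceCtorEq] at h hx hy
  · have : g v = g w := by omega
    rw [hg this]
  · have h1 := i.2
    have h2 := i'.2
    have : g v = g w ∧ (i : ℕ) = i' := by
      split_ifs at h hx hy <;> omega
    obtain ⟨h3, h4⟩ := this
    rw [hg h3, Fin.ext h4]
  · obtain ⟨h1, h2⟩ := h
    have b1 := edgeLen_bounds hg hadj e
    have b2 := edgeLen_bounds hg hadj e'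
    have h3 : edgeLen G g e = edgeLen G g e' := by omega
    rw [h2, h3] at hx
    have h4 : lowEnd G g e = lowEnd G g e' := by omega
    obtain rfl := edge_ext hg e e' h4 h3
    have h5 : (i : ℕ) = i' := by
      have := i.2
      have := i'.2
      unfold pathIdx at h2
      split_ifs at h2 <;> omega
    rw [Fin.ext h5]

lemma card_window_le [Fintype V] [DecidableRel G.Adj] {k : ℕ} (hk : 3 ≤ k) {g : V → ℕ}
    (hg : Function.Injective g)
    (hadj : ∀ v w, G.Adj v w → ((g v : ℤ) - (g w : ℤ)).natAbs ≤ k) (m : ℕ) (hm : m % 2 = 0) :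
    (Finset.univ.filter fun z : H0Vert G k => m ≤ key G k g z ∧ key G k g z ≤ m + 2).card
      ≤ k ^ 4 + 2 * k ^ 2 + 1 := by
  have hcard := Finset.card_le_card_of_injOn
    (s := Finset.univ.filter fun z : H0Vert G k => m ≤ key G k g z ∧ key G k g z ≤ m + 2)
    (t := (Finset.univ : Finset Unit).disjSum
      ((Finset.range (k ^ 4)).disjSum (Finset.range k ×ˢ Finset.range (2 * k - 1))))
    (label G k g) ?_ ?_
  · simp only [Finset.card_disjSum, Finset.card_product, Finset.card_range, Finset.card_univ,
      Fintype.card_unit] at hcard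
    have : k * (2 * k - 1) ≤ 2 * k ^ 2 := by
      calc k * (2 * k - 1) ≤ k * (2 * k) := Nat.mul_le_mul_left _ (Nat.sub_le _ _)
        _ = 2 * k ^ 2 := by ring
    omega
  · intro z _
    rcases z with v | ⟨v, i⟩ | ⟨e, i⟩ <;>
      rw [Finset.mem_coe] <;> simp only [label]
    · simp
    · have := i.2
      have : (if (i : ℕ) < k ^ 4 then (i : ℕ) else (i : ℕ) - k ^ 4) < k ^ 4 := by
        split_ifs <;> omega
      simpa using this
    · have := edgeLen_bounds hg hadj e
      have h1 := pathIdx_lt hk g e i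
      have h2 : edgeLen G g e - 1 < k := by omega
      simp [h1, h2]
  · intro x hx y hy h
    simp only [Finset.coe_filter, Finset.mem_univ, true_and, Set.mem_ofPred_eq] at hx hy
    exact label_injOn hk hg hadj m hm x y hx hy h

/-- The two ends of an edge of `H₀` lie in a common window. -/
lemma exists_window {k : ℕ} (hk : 3 ≤ k) {g : V → ℕ} (hg : Function.Injective g)
    (hadj : ∀ v w, G.Adj v w → ((g v : ℤ) - (g w : ℤ)).natAbs ≤ k) (x y : H0Vert G k)
    (h : H0Rel G k x y) :
    ∃ m, m % 2 = 0 ∧ (m ≤ key G k g x ∧ key G k g x ≤ m + 2) ∧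
      (m ≤ key G k g y ∧ key G k g y ≤ m + 2) := by
  -- Only the pendants have odd keys, so the smaller key, rounded down to an even number, works.
  refine ⟨2 * (min (key G k g x) (key G k g y) / 2), by omega, ?_⟩
  rcases x with v | ⟨v, i⟩ | ⟨e, i⟩ <;> rcases y with w | ⟨w, i'⟩ | ⟨e', i'⟩ <;>
    simp only [H0Rel] at h
  · subst h
    simp only [key]
    split_ifs <;> omega
  · have b := edgeLen_bounds hg hadj e'
    have h3 := i'.2
    simp only [key, pathIdx, lowEnd, edgeLen] at b ⊢
    rcases h with ⟨rfl, h2⟩ | ⟨rfl, h2⟩ <;> split_ifs <;> omega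
  · obtain ⟨rfl, h2⟩ := h
    have h3 := i'.2
    simp only [key, pathIdx]
    split_ifs <;> omega

/-! ### A layout of `G` from a layout of `H` -/

variable (G)

/-- Along the path of an edge `e` of `G`, positions drift by at most `L` per step and colours
alternate. -/
lemma path_step {k L : ℕ} (s : H0Vert G k → Bool) (pos : H0Vert G k → ℤ)
    (hs : ∀ x y, H0Rel G k x y → s x ≠ s y) (hp : ∀ x y, H0Rel G k x y → |pos x - pos y| ≤ L)
    (e : OrdEdge G) (i : ℕ) (hi : i < 2 * k - 1) :
    |pos (Sum.inl e.1.1) - pos (Sum.inr (Sum.inr (e, ⟨i, hi⟩)))| ≤ (i + 1) * L ∧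
      (s (Sum.inl e.1.1) = s (Sum.inr (Sum.inr (e, ⟨i, hi⟩))) ↔ i % 2 = 1) := by
  induction i with
  | zero =>
    have hrel : H0Rel G k (Sum.inl e.1.1) (Sum.inr (Sum.inr (e, ⟨0, hi⟩))) := Or.inl ⟨rfl, rfl⟩
    refine ⟨by simpa using hp _ _ hrel, ?_⟩
    simpa using hs _ _ hrel
  | succ i ih =>
    obtain ⟨h1, h2⟩ := ih (by omega)
    have hrel : H0Rel G k (Sum.inr (Sum.inr (e, ⟨i, by omega⟩)))
      (Sum.inr (Sum.inr (e, ⟨i + 1, hi⟩))) := ⟨rfl, rfl⟩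
    have h3 := hp _ _ hrel
    have h4 := hs _ _ hrel
    constructor
    · rw [abs_le] at h1 h3 ⊢
      push_cast
      constructor <;> linarith [h1.1, h1.2, h3.1, h3.2]
    · have h5 : (i + 1) % 2 = 1 ↔ ¬ i % 2 = 1 := by omega
      rw [h5, ← h2]
      revert h4
      generalize s (Sum.inl e.1.1) = a
      generalize s (Sum.inr (Sum.inr (e, ⟨i, _⟩))) = b
      generalize s (Sum.inr (Sum.inr (e, ⟨i + 1, _⟩))) = c
      revert a b c
      decide

lemma path_end {k L : ℕ} (hk : 3 ≤ k) (s : H0Vert G k → Bool) (pos : H0Vert G k → ℤ)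
    (hs : ∀ x y, H0Rel G k x y → s x ≠ s y) (hp : ∀ x y, H0Rel G k x y → |pos x - pos y| ≤ L)
    (v w : V) (hvw : G.Adj v w) :
    |pos (Sum.inl v) - pos (Sum.inl w)| ≤ 2 * k * L ∧ s (Sum.inl v) = s (Sum.inl w) := by
  wlog hlt : v < w generalizing v w
  · have := this w v hvw.symm (lt_of_le_of_ne (not_lt.1 hlt) hvw.ne')
    rw [abs_sub_comm]
    exact ⟨this.1, this.2.symm⟩
  let e : OrdEdge G := ⟨(v, w), hvw, hlt⟩
  have hi : 2 * k - 2 < 2 * k - 1 := by omega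
  obtain ⟨h1, h2⟩ := path_step G s pos hs hp e (2 * k - 2) hi
  have hrel : H0Rel G k (Sum.inl w) (Sum.inr (Sum.inr (e, ⟨2 * k - 2, hi⟩))) :=
    Or.inr ⟨rfl, rfl⟩
  have h3 := hp _ _ hrel
  have h4 := hs _ _ hrel
  change |pos (Sum.inl v) - _| ≤ _ at h1
  change s (Sum.inl v) = _ ↔ _ at h2
  constructor
  · have hc : ((2 * k - 2 : ℕ) : ℤ) = 2 * k - 2 := by
      rw [Nat.cast_sub (by omega)]
      push_cast
      ring
    rw [hc] at h1
    rw [abs_le] at h1 h3 ⊢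
    constructor <;> linarith [h1.1, h1.2, h3.1, h3.2]
  · have h5 : ¬ (2 * k - 2) % 2 = 1 := by omega
    rw [← h2] at h5
    revert h4 h5
    generalize s (Sum.inl v) = a
    generalize s (Sum.inl w) = b
    generalize s (Sum.inr (Sum.inr (e, ⟨2 * k - 2, hi⟩))) = c
    revert a b c
    decide

/-- If each colour class of `H₀` is placed injectively with edges of length at most
`L = k⁴ + 2k²`, then ordering `V` by the places of the `x_v` has bandwidth at most `k`: the pendants
of `k + 2` consecutive vertices do not fit near a path with `2k` edges. -/
lemma bandwidthLE_of_position [Fintype V] {k : ℕ} (hk : 3 ≤ k) (hG : G.Connected)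
    (s : H0Vert G k → Bool)
    (pos : H0Vert G k → ℕ) (hs : ∀ x y, H0Rel G k x y → s x ≠ s y)
    (hinj : ∀ x y, s x = s y → pos x = pos y → x = y)
    (hp : ∀ x y, H0Rel G k x y → |(pos x : ℤ) - pos y| ≤ (k ^ 4 + 2 * k ^ 2 : ℕ)) :
    BandwidthLE G k := by
  have hedge := path_end G hk s (fun x => (pos x : ℤ)) hs hp
  have hcol : ∀ v w, s (Sum.inl v) = s (Sum.inl w) := by
    intro v w
    obtain ⟨p⟩ := hG.preconnected v w
    induction p with
    | nil => rfl
    | cons h _ ih => exact (hedge _ _ h).2.trans ih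
  obtain ⟨f, hf⟩ := exists_rank fun v : V => pos (Sum.inl v)
  refine ⟨f, fun v w hvw => ?_⟩
  wlog h : f v ≤ f w generalizing v w
  · have := this w v hvw.symm (le_of_not_ge h)
    omega
  by_contra hlong
  have h' : (f v : ℕ) ≤ f w := h
  let S : Finset V := (Finset.Icc (f v) (f w)).map f.symm.toEmbedding
  have hS : k + 2 ≤ S.card := by
    rw [Finset.card_map, Fin.card_Icc]
    omega
  have hmem : ∀ u ∈ S, pos (Sum.inl v) ≤ pos (Sum.inl u) ∧ pos (Sum.inl u) ≤ pos (Sum.inl w) := by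
    intro u hu
    simp only [S, Finset.mem_map, Finset.mem_Icc, Equiv.coe_toEmbedding] at hu
    obtain ⟨t, ⟨h1, h2⟩, rfl⟩ := hu
    exact ⟨hf _ _ (by simpa using h1), hf _ _ (by simpa using h2)⟩
  set L : ℕ := k ^ 4 + 2 * k ^ 2 with hL
  have hcard := Finset.card_le_card_of_injOn (s := S ×ˢ (Finset.univ : Finset (Fin (2 * k ^ 4))))
    (t := Finset.Icc ((pos (Sum.inl v) : ℤ) - L) (pos (Sum.inl w) + L))
    (fun q => (pos (Sum.inr (Sum.inl q)) : ℤ)) ?_ ?_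
  · rw [Finset.card_product, Finset.card_univ, Fintype.card_fin, Int.card_Icc] at hcard
    have h1 := (abs_le.1 (hedge v w hvw).1).1
    have h2 : (S.card * (2 * k ^ 4) : ℤ) ≤
        (pos (Sum.inl w) : ℤ) + L + 1 - ((pos (Sum.inl v) : ℤ) - L) := by
      have h0 : (0 : ℤ) ≤ (pos (Sum.inl w) : ℤ) + L + 1 - ((pos (Sum.inl v) : ℤ) - L) := by
        have : pos (Sum.inl v) ≤ pos (Sum.inl w) := hf _ _ h
        omega
      rw [← Int.toNat_of_nonneg h0]
      exact_mod_cast hcard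
    have h3 : ((k + 2 : ℤ)) * (2 * k ^ 4) ≤ S.card * (2 * k ^ 4) :=
      mul_le_mul_of_nonneg_right (by exact_mod_cast hS) (by positivity)
    have hk' : (3 : ℤ) ≤ k := by exact_mod_cast hk
    have hLz : (L : ℤ) = k ^ 4 + 2 * k ^ 2 := by rw [hL]; push_cast; ring
    rw [hLz] at h1 h2
    have h4 : (3 : ℤ) * k ^ 3 ≤ k ^ 4 := by nlinarith [pow_nonneg (by omega : (0 : ℤ) ≤ k) 3]
    have h5 : (3 : ℤ) * k ^ 2 ≤ k ^ 3 := by nlinarith [pow_nonneg (by omega : (0 : ℤ) ≤ k) 2]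
    have h6 : (9 : ℤ) ≤ k ^ 2 := by nlinarith
    nlinarith
  · rintro ⟨u, i⟩ hq
    simp only [Finset.coe_product, Set.mem_prod, Finset.mem_coe] at hq
    have h1 := hmem u hq.1
    have hrel : H0Rel G k (Sum.inl u) (Sum.inr (Sum.inl (u, i))) := rfl
    have h2 := abs_le.1 (hp _ _ hrel)
    simp only [Finset.coe_Icc, Set.mem_Icc]
    omega
  · rintro ⟨u, i⟩ _ ⟨u', i'⟩ _ hq
    have hrel : H0Rel G k (Sum.inl u) (Sum.inr (Sum.inl (u, i))) := rfl
    have hrel' : H0Rel G k (Sum.inl u') (Sum.inr (Sum.inl (u', i'))) := rfl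
    have hc : s (Sum.inr (Sum.inl (u, i))) = s (Sum.inr (Sum.inl (u', i'))) := by
      have h1 := hs _ _ hrel
      have h2 := hs _ _ hrel'
      rw [hcol u' u] at h2
      exact (Bool.eq_not_of_ne h1.symm).trans (Bool.eq_not_of_ne h2.symm).symm
    have := hinj _ _ hc (Int.ofNat.inj hq)
    simpa using this

lemma HGraph_adj_of_rel {k : ℕ} (hk : 3 ≤ k) (v₀ : V) (x y : H0Vert G k) (h : H0Rel G k x y) :
    (HGraph G k v₀).Adj (true, x) (true, y) := by
  rw [HGraph, SimpleGraph.fromRel_adj]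
  refine ⟨fun hxy => parity_ne_of_rel G hk x y h ?_, Or.inl (Or.inl ⟨rfl, h⟩)⟩
  rw [(Prod.mk.inj hxy).2]

end Layout

/-- A bipartite layout as a single position function, injective on each colour class. -/
lemma BipartiteBandwidthLE.exists_position {W : Type*} [Fintype W] {J : SimpleGraph W} {L : ℕ}
    (h : BipartiteBandwidthLE J L) :
    ∃ (s : W → Bool) (pos : W → ℕ), (∀ x y, J.Adj x y → s x ≠ s y) ∧
      (∀ x y, s x = s y → pos x = pos y → x = y) ∧
      ∀ x y, J.Adj x y → |(pos x : ℤ) - pos y| ≤ L := by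
  obtain ⟨s, hs, α, β, hαβ⟩ := h
  let pos : W → ℕ := fun x =>
    if hx : s x = true then α ⟨x, hx⟩ else β ⟨x, Bool.eq_false_of_not_eq_true hx⟩
  have pos_true : ∀ x (hx : s x = true), pos x = α ⟨x, hx⟩ := fun x hx => dif_pos hx
  have pos_false : ∀ x (hx : s x = false), pos x = β ⟨x, hx⟩ := fun x hx =>
    dif_neg (by simp [hx])
  refine ⟨s, pos, hs, fun x y hc hpos => ?_, fun x y hadj => ?_⟩
  · cases hx : s x
    · have hy := hc.symm.trans hx
      rw [pos_false x hx, pos_false y hy] at hpos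
      simpa using β.injective (Fin.ext hpos)
    · have hy := hc.symm.trans hx
      rw [pos_true x hx, pos_true y hy] at hpos
      simpa using α.injective (Fin.ext hpos)
  · have hne := hs x y hadj
    cases hx : s x
    · have hy : s y = true := by simpa [hx] using hne
      rw [pos_false x hx, pos_true y hy]
      have := hαβ ⟨y, hy⟩ ⟨x, hx⟩ hadj.symm
      rw [abs_le]
      omega
    · have hy : s y = false := by simpa [hx] using hne
      rw [pos_true x hx, pos_false y hy]
      have := hαβ ⟨x, hx⟩ ⟨y, hy⟩ hadj
      rw [abs_le]
      omega

/-- For a caterpillar `G` and `k ≥ 3`, `H` has bipartite bandwidth at most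
`L = k⁴ + 2k²` if and only if `G` has bandwidth at most `k`. -/
theorem bipartite_bandwidth_H_iff_bandwidth {V : Type*} [Fintype V] [LinearOrder V]
    (G : SimpleGraph V) [DecidableRel G.Adj] (k : ℕ) (v₀ : V)
    (hcat : IsCaterpillar G) (hk : 3 ≤ k) :
    BipartiteBandwidthLE (HGraph G k v₀) (k ^ 4 + 2 * k ^ 2) ↔ BandwidthLE G k := by
  constructor
  · intro h
    obtain ⟨s, pos, hs, hinj, hp⟩ := h.exists_position
    -- One copy of `H₀` is enough.
    refine bandwidthLE_of_position G hk hcat.1 (fun x => s (true, x)) (fun x => pos (true, x))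
      (fun x y hxy => hs _ _ (HGraph_adj_of_rel G hk v₀ x y hxy)) (fun x y hc hxy => ?_)
      (fun x y hxy => hp _ _ (HGraph_adj_of_rel G hk v₀ x y hxy))
    exact (Prod.mk.inj (hinj _ _ hc hxy)).2
  · rintro ⟨f, hf⟩
    have hg : Function.Injective fun v => (f v : ℕ) := fun v w h => f.injective (Fin.ext h)
    obtain ⟨r, hr⟩ := exists_rank (key G k fun v => (f v : ℕ))
    refine bipartiteBandwidthLE_of_H0 G hk v₀ r fun x y hxy => ?_
    obtain ⟨m, hm, hx, hy⟩ := exists_window hk hg hf x y hxy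
    exact rank_dist_le _ r hr m (m + 2) _ (card_window_le hk hg hf m hm) x y hx hy
end

section
/- Let G = (R,B,E) be a bipartite graph with red vertex set R, blue vertex set B, capacities c : R → ℕ, and let k ∈ ℕ. Let G* be the graph obtained from G by adding two new vertices x and x', where x' is adjacent only to x and x is adjacent to x' and to all vertices of R, and extending the capacity function by setting the capacity of every blue vertex and of x' to 0 and the capacity of x to |R| + 2. Then G* has a capacitated dominating set of size at most k + 1 if and only if G has a capacitated red-blue dominating set of size at most k. -/
/-!
The vertex `x'` has capacity `0` and its only neighbour is `x`, so `x` lies in every capacitated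
dominating set of `G*`. A blue vertex has capacity `0` too, so it must be dominated by a red
neighbour, and the red part of the set, which has at least one element fewer than the whole set,
is a red-blue dominating set. Conversely, adding `x` to a red-blue dominating set suffices, since
the capacity `|R| + 2` lets `x` dominate all red vertices, `x'` and itself.
-/

/-- The graph `G*` obtained from a red-blue bipartite graph (red vertex type `R`,
blue vertex type `B`, adjacency `Adj : R → B → Prop`) by adding two new vertices
`x = Sum.inr true` and `x' = Sum.inr false`, where `x'` is adjacent only to `x` and
`x` is adjacent to `x'` and to all red vertices. -/
def capDSGraph {R B : Type*} (Adj : R → B → Prop) :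
    SimpleGraph ((R ⊕ B) ⊕ Bool) :=
  SimpleGraph.fromRel (fun x y =>
    match x, y with
    | Sum.inl (Sum.inl r), Sum.inl (Sum.inr b) => Adj r b
    | Sum.inr true, Sum.inl (Sum.inl _) => True
    | Sum.inr true, Sum.inr false => True
    | _, _ => False)

/-- The extended capacity function of `G*`: red vertices keep their capacity, blue
vertices and `x'` get capacity `0`, and `x` gets capacity `|R| + 2`. -/
def capDSCap {R B : Type*} [Fintype R] (c : R → ℕ) : (R ⊕ B) ⊕ Bool → ℕ
  | Sum.inl (Sum.inl r) => c r
  | Sum.inl (Sum.inr _) => 0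
  | Sum.inr true => Fintype.card R + 2
  | Sum.inr false => 0

theorem capDSGraph_adj_blue {R B : Type*} (Adj : R → B → Prop) (b : B) (v : (R ⊕ B) ⊕ Bool) :
    (capDSGraph Adj).Adj (Sum.inl (Sum.inr b)) v ↔
      ∃ r, v = Sum.inl (Sum.inl r) ∧ Adj r b := by
  rcases v with (r | b') | _ | _ <;> simp [capDSGraph]

theorem capDSGraph_adj_pendant {R B : Type*} (Adj : R → B → Prop) (v : (R ⊕ B) ⊕ Bool) :
    (capDSGraph Adj).Adj (Sum.inr false) v ↔ v = Sum.inr true := by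
  rcases v with (r | b') | _ | _ <;> simp [capDSGraph]

theorem capDSGraph_adj_red_center {R B : Type*} (Adj : R → B → Prop) (r : R) :
    (capDSGraph Adj).Adj (Sum.inl (Sum.inl r)) (Sum.inr true) := by
  simp [capDSGraph]

/-- `G*` has a capacitated dominating set of size at most `k + 1` if and only if the
red-blue graph `G` has a capacitated red-blue dominating set of size at most `k`. -/
theorem capacitated_red_blue_to_capacitated_dominating_set
    {R B : Type*} [Fintype R] [Fintype B]
    (Adj : R → B → Prop) (c : R → ℕ) (k : ℕ) :
    (∃ (S : Set ((R ⊕ B) ⊕ Bool)) (f : (R ⊕ B) ⊕ Bool → (R ⊕ B) ⊕ Bool),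
        S.ncard ≤ k + 1 ∧
        (∀ v, f v ∈ S ∧ ((capDSGraph Adj).Adj v (f v) ∨ v = f v)) ∧
        (∀ v ∈ S, {u | f u = v}.ncard ≤ capDSCap (B := B) c v)) ↔
    (∃ (S : Set R) (f : B → R),
        S.ncard ≤ k ∧
        (∀ b, f b ∈ S ∧ Adj (f b) b) ∧
        (∀ r ∈ S, {b | f b = r}.ncard ≤ c r)) := by
  constructor
  · rintro ⟨S, f, hS, hf, hc⟩
    -- A vertex that dominates anything has positive capacity.
    have hpos : ∀ v, capDSCap (B := B) c (f v) ≠ 0 := by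
      intro v h0
      have h1 := hc (f v) (hf v).1
      rw [h0, Nat.le_zero, Set.ncard_eq_zero (Set.toFinite _)] at h1
      have : v ∈ {u | f u = f v} := rfl
      rw [h1] at this
      exact this
    have hx : Sum.inr true ∈ S := by
      have h := hf (Sum.inr false)
      rcases h.2 with h2 | h2
      · rw [capDSGraph_adj_pendant] at h2
        exact h2 ▸ h.1
      · exact absurd (by rw [← h2]; rfl) (hpos (Sum.inr false))
    have hb : ∀ b : B, ∃ r, f (Sum.inl (Sum.inr b)) = Sum.inl (Sum.inl r) ∧ Adj r b := by
      intro b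
      rcases (hf (Sum.inl (Sum.inr b))).2 with h2 | h2
      · exact (capDSGraph_adj_blue Adj b _).1 h2
      · exact absurd (by rw [← h2]; rfl) (hpos (Sum.inl (Sum.inr b)))
    choose g hg hgA using hb
    have hinjR : Function.Injective (fun r : R => (Sum.inl (Sum.inl r) : (R ⊕ B) ⊕ Bool)) :=
      Sum.inl_injective.comp Sum.inl_injective
    have hinjB : Function.Injective (fun b : B => (Sum.inl (Sum.inr b) : (R ⊕ B) ⊕ Bool)) :=
      Sum.inl_injective.comp Sum.inr_injective
    refine ⟨{r | Sum.inl (Sum.inl r) ∈ S}, g, ?_, fun b => ⟨?_, hgA b⟩, fun r hr => ?_⟩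
    · have hsub : insert (Sum.inr true)
          ((fun r : R => (Sum.inl (Sum.inl r) : (R ⊕ B) ⊕ Bool)) ''
            {r | Sum.inl (Sum.inl r) ∈ S}) ⊆ S := by
        rintro _ (rfl | ⟨r, hr, rfl⟩)
        · exact hx
        · exact hr
      have h1 := Set.ncard_le_ncard hsub (Set.toFinite _)
      rw [Set.ncard_insert_of_notMem (by simp) (Set.toFinite _),
        Set.ncard_image_of_injective _ hinjR] at h1
      omega
    · rw [Set.mem_ofPred_eq, ← hg b]
      exact (hf (Sum.inl (Sum.inr b))).1
    · rw [← Set.ncard_image_of_injective {b | g b = r} hinjB]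
      refine le_trans (Set.ncard_le_ncard ?_ (Set.toFinite _)) (hc _ hr)
      rintro _ ⟨b, rfl, rfl⟩
      exact hg b
  · rintro ⟨S, f, hS, hf, hc⟩
    refine ⟨insert (Sum.inr true) ((fun r => Sum.inl (Sum.inl r)) '' S),
      Sum.elim (Sum.elim (fun _ => Sum.inr true) (fun b => Sum.inl (Sum.inl (f b))))
        (fun _ => Sum.inr true), ?_, ?_, ?_⟩
    · refine (Set.ncard_insert_le _ _).trans (Nat.succ_le_succ ?_)
      exact (Set.ncard_image_le (Set.toFinite _)).trans hS
    · rintro ((r | b) | _ | _)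
      · exact ⟨Or.inl rfl, Or.inl (capDSGraph_adj_red_center Adj r)⟩
      · exact ⟨Or.inr ⟨f b, (hf b).1, rfl⟩,
          Or.inl ((capDSGraph_adj_blue Adj b _).2 ⟨f b, rfl, (hf b).2⟩)⟩
      · exact ⟨Or.inl rfl, Or.inl ((capDSGraph_adj_pendant Adj _).2 rfl)⟩
      · exact ⟨Or.inl rfl, Or.inr rfl⟩
    · rintro _ (rfl | ⟨r, hr, rfl⟩)
      · -- The vertices dominated by `x` are the image of `R ⊕ Bool`, of size `|R| + 2`.
        refine le_trans (Set.ncard_le_ncard (t := Set.range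
          (Sum.map Sum.inl id : R ⊕ Bool → (R ⊕ B) ⊕ Bool)) ?_ (Set.toFinite _)) ?_
        · rintro ((r | b) | t) h
          · exact ⟨Sum.inl r, rfl⟩
          · simp at h
          · exact ⟨Sum.inr t, rfl⟩
        · rw [← Set.image_univ]
          refine (Set.ncard_image_le (Set.toFinite _)).trans ?_
          simp [Set.ncard_univ, capDSCap]
      · refine le_trans (le_trans (Set.ncard_le_ncard
          (t := (fun b => Sum.inl (Sum.inr b)) '' {b | f b = r}) ?_ (Set.toFinite _))
          (Set.ncard_image_le (Set.toFinite _))) (hc r hr)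
        rintro ((r' | b) | t) h
        · simp at h
        · exact ⟨b, by simpa using h, rfl⟩
        · simp at h
end
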